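/- arXiv:0812.1752 — 2 statements merged into one kernel-verified Lean document; each statement's English description precedes it below -/
import Mathlib

section
/- Let K ≥ 1, let L be an integer with 0 ≤ L ≤ K, and let a = (a_0, ..., a_K) be a nonzero vector of real numbers with a_k = 0 for all k ≤ L. Then the cosine polynomial C_a(x) = ∑_{k=0}^{K} a_k cos(kx) satisfies Z(C_a) ≥ 2L, where Z(f) denotes the number of zeros of f in [0, 2π) counted with multiplicity. -/
open Real Set
open scoped ENNReal

/-- The multiplicity of a zero `x` of `f`: the least `n ≥ 1` such that the
`n`-th derivative of `f` at `x` is nonzero. -/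
noncomputable def zeroMult (f : ℝ → ℝ) (x : ℝ) : ℕ :=
  sInf {n : ℕ | 1 ≤ n ∧ iteratedDeriv n f x ≠ 0}

/-- The number of zeros of `f` in one period `[0, 2π)`, counted with multiplicity. -/
noncomputable def Zcount (f : ℝ → ℝ) : ℝ≥0∞ :=
  ∑' x : {x : ℝ // x ∈ Set.Ico (0 : ℝ) (2 * Real.pi) ∧ f x = 0},
    (zeroMult f x.1 : ℝ≥0∞)

open Polynomial in
lemma sign_fix (n : ℕ) : ∀ P : ℝ[X], P ≠ 0 → P.natDegree = n →
    ∃ S : Finset ℝ, (∀ s ∈ S, s ∈ Ioo (-1 : ℝ) 1 ∧ P.eval s = 0) ∧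
      ((∀ t ∈ Ioo (-1 : ℝ) 1, 0 ≤ (P * ∏ s ∈ S, (X - C s)).eval t) ∨
       (∀ t ∈ Ioo (-1 : ℝ) 1, (P * ∏ s ∈ S, (X - C s)).eval t ≤ 0)) := by
  induction n with
  | zero =>
    intro P _ hd
    refine ⟨∅, by simp, ?_⟩
    rw [eq_C_of_natDegree_eq_zero hd]
    rcases le_total 0 (P.coeff 0) with h | h
    · left; intro t _; simpa using h
    · right; intro t _; simpa using h
  | succ n ih =>
    intro P hP hd
    by_cases hr : ∃ s ∈ Ioo (-1 : ℝ) 1, P.eval s = 0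
    · obtain ⟨s, hs, h0⟩ := hr
      obtain ⟨Q, rfl⟩ := dvd_iff_isRoot.mpr h0
      have hQ : Q ≠ 0 := right_ne_zero_of_mul hP
      have hQd : Q.natDegree = n := by
        rw [natDegree_mul (X_sub_C_ne_zero s) hQ, natDegree_X_sub_C] at hd
        omega
      obtain ⟨S, hS, hsg⟩ := ih Q hQ hQd
      by_cases hsS : s ∈ S
      · refine ⟨S.erase s, ?_, ?_⟩
        · intro u hu
          have := hS u (Finset.mem_of_mem_erase hu)
          exact ⟨this.1, by simp [this.2]⟩
        · have : (X - C s) * Q * ∏ u ∈ S.erase s, (X - C u) = Q * ∏ u ∈ S, (X - C u) := by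
            rw [← Finset.mul_prod_erase S _ hsS]; ring
          rw [this]; exact hsg
      · refine ⟨insert s S, ?_, ?_⟩
        · intro u hu
          rcases Finset.mem_insert.mp hu with rfl | hu
          · exact ⟨hs, h0⟩
          · have := hS u hu
            exact ⟨this.1, by simp [this.2]⟩
        · have : (X - C s) * Q * ∏ u ∈ insert s S, (X - C u)
              = (X - C s) ^ 2 * (Q * ∏ u ∈ S, (X - C u)) := by
            rw [Finset.prod_insert hsS]; ring
          rw [this]
          rcases hsg with h | h
          · left; intro t ht
            rw [eval_mul]
            exact mul_nonneg (by rw [eval_pow]; positivity) (h t ht)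
          · right; intro t ht
            rw [eval_mul]
            exact mul_nonpos_of_nonneg_of_nonpos (by rw [eval_pow]; positivity) (h t ht)
    · refine ⟨∅, by simp, ?_⟩
      push Not at hr
      simp only [Finset.prod_empty, mul_one]
      by_contra hcon
      push Not at hcon
      obtain ⟨⟨t, ht, h1⟩, ⟨u, hu, h2⟩⟩ := hcon
      have := (isPreconnected_Ioo (a := (-1 : ℝ)) (b := 1)).intermediate_value ht hu
        (f := fun x => P.eval x) P.continuous.continuousOn
      obtain ⟨z, hz, hz0⟩ := this ⟨h1.le, h2.le⟩
      exact hr z hz hz0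

lemma cos_orth (n : ℕ) : ∀ k : ℕ, n < k →
    ∫ x in (0 : ℝ)..π, cos (k * x) * cos x ^ n = 0 := by
  induction n with
  | zero =>
    intro k hk
    have hk' : (k : ℝ) ≠ 0 := by positivity
    simp only [pow_zero, mul_one]
    rw [intervalIntegral.integral_comp_mul_left (fun x => cos x) hk']
    simp
  | succ n ih =>
    intro k hk
    obtain ⟨j, rfl⟩ : ∃ j, k = j + 1 := ⟨k - 1, by omega⟩
    have h1 := ih (j + 2) (by omega)
    have h2 := ih j (by omega)
    have : ∀ x : ℝ, cos ((j + 1 : ℕ) * x) * cos x ^ (n + 1)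
        = (cos ((j + 2 : ℕ) * x) * cos x ^ n + cos (j * x) * cos x ^ n) / 2 := by
      intro x
      have e1 : ((j + 2 : ℕ) : ℝ) * x = (j + 1 : ℕ) * x + x := by push_cast; ring
      have e2 : (j : ℝ) * x = (j + 1 : ℕ) * x - x := by push_cast; ring
      rw [e1, e2, cos_add, cos_sub]; ring
    simp_rw [this]
    rw [intervalIntegral.integral_div, intervalIntegral.integral_add, h1, h2]
    · simp
    · exact Continuous.intervalIntegrable (by fun_prop) _ _
    · exact Continuous.intervalIntegrable (by fun_prop) _ _

open Polynomial in
lemma cos_orth_poly (R : ℝ[X]) (k : ℕ) (h : R.natDegree < k) :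
    ∫ x in (0 : ℝ)..π, cos (k * x) * R.eval (cos x) = 0 := by
  simp_rw [eval_eq_sum_range, Finset.mul_sum]
  rw [intervalIntegral.integral_finsetSum]
  · refine Finset.sum_eq_zero fun i hi => ?_
    have := cos_orth i k (by have := Finset.mem_range.mp hi; omega)
    simp_rw [mul_left_comm]
    rw [intervalIntegral.integral_const_mul, this, mul_zero]
  · intro i _
    exact Continuous.intervalIntegrable (by fun_prop) _ _

open Polynomial in
lemma poly_zero_of_cos (P : ℝ[X]) (h : ∀ x ∈ Ioo 0 π, P.eval (cos x) = 0) : P = 0 := by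
  refine Polynomial.eq_zero_of_infinite_isRoot P ((Ioo_infinite (show (-1 : ℝ) < 1 by norm_num)).mono ?_)
  intro t ht
  have := h (arccos t) ⟨arccos_pos.mpr ht.2, arccos_lt_pi.mpr ht.1⟩
  rwa [cos_arccos ht.1.le ht.2.le] at this

open Polynomial in
lemma poly_zero_of_int (P : ℝ[X]) (h : ∀ t ∈ Ioo (-1 : ℝ) 1, 0 ≤ P.eval t)
    (hi : ∫ x in (0 : ℝ)..π, P.eval (cos x) = 0) : P = 0 := by
  apply poly_zero_of_cos
  by_contra hcon
  push Not at hcon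
  obtain ⟨x, hx, hne⟩ := hcon
  have hc : Continuous fun x => P.eval (cos x) := P.continuous.comp continuous_cos
  have hin : ∀ x ∈ Ioo 0 π, cos x ∈ Ioo (-1 : ℝ) 1 := by
    intro x hx
    constructor
    · rw [← cos_pi]; exact cos_lt_cos_of_nonneg_of_le_pi hx.1.le le_rfl hx.2
    · rw [← cos_zero]; exact cos_lt_cos_of_nonneg_of_le_pi le_rfl hx.2.le hx.1
  have hcl : ∀ t ∈ Icc (-1 : ℝ) 1, 0 ≤ P.eval t := by
    intro t ht
    rw [← closure_Ioo (by norm_num)] at ht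
    exact closure_minimal (s := Ioo (-1 : ℝ) 1) (t := {t | 0 ≤ P.eval t}) h
      (isClosed_le continuous_const P.continuous) ht
  have := intervalIntegral.integral_pos pi_pos hc.continuousOn
    (fun y _ => hcl _ (cos_mem_Icc y)) ⟨x, ⟨hx.1.le, hx.2.le⟩, lt_of_le_of_ne (h _ (hin x hx)) hne.symm⟩
  exact this.ne' hi

open Polynomial in
noncomputable def chebSeq : Polynomial.Sequence ℝ where
  elems' := fun n => Chebyshev.T ℝ n
  degree_eq' := fun n => by rw [Chebyshev.degree_T]; simp

lemma zeroMult_pos (f : ℝ → ℝ) (hf : ∀ x, AnalyticAt ℝ f x) (x : ℝ) (h0 : f x = 0)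
    (hne : ∃ y, f y ≠ 0) : 1 ≤ zeroMult f x := by
  have hn : {n : ℕ | 1 ≤ n ∧ iteratedDeriv n f x ≠ 0}.Nonempty := by
    by_contra hcon
    rw [not_nonempty_iff_eq_empty, eq_empty_iff_forall_notMem] at hcon
    have hz : ∀ n, iteratedDeriv n f x = 0 := by
      intro n
      rcases Nat.eq_zero_or_pos n with rfl | hn
      · simpa using h0
      · by_contra h
        exact hcon n ⟨hn, h⟩
    have htop : analyticOrderAt f x = ⊤ := by
      rw [ENat.eq_top_iff_forall_ge]
      intro n
      exact (natCast_le_analyticOrderAt_iff_iteratedDeriv_eq_zero (hf x)).mpr fun i _ => hz i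
    rw [analyticOrderAt_eq_top] at htop
    obtain ⟨y, hy⟩ := hne
    have := AnalyticOnNhd.eqOn_zero_of_preconnected_of_eventuallyEq_zero (f := f) (U := univ)
      (fun x _ => hf x) isPreconnected_univ (mem_univ x) htop
    exact hy (this (mem_univ y))
  exact (Nat.sInf_mem hn).1

theorem cosine_vanishing_low_coeffs_zero_count (K L : ℕ) (hK : 1 ≤ K) (hL : L ≤ K)
    (a : Fin (K + 1) → ℝ) (ha : a ≠ 0)
    (hlow : ∀ k : Fin (K + 1), (k : ℕ) ≤ L → a k = 0) :
    (2 * L : ℝ≥0∞) ≤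
      Zcount (fun x => ∑ k : Fin (K + 1), a k * Real.cos ((k : ℕ) * x)) := by
  set f : ℝ → ℝ := fun x => ∑ k : Fin (K + 1), a k * Real.cos ((k : ℕ) * x) with hfdef
  set P : Polynomial ℝ := ∑ k : Fin (K + 1), a k • chebSeq (k : ℕ) with hPdef
  have hfP : ∀ x, f x = P.eval (cos x) := by
    intro x
    simp [hfdef, hPdef, Polynomial.eval_finset_sum, chebSeq, Polynomial.Chebyshev.T_real_cos]
  have hP : P ≠ 0 := by
    intro h
    have hli := chebSeq.linearIndependent.comp (fun k : Fin (K + 1) => (k : ℕ)) Fin.val_injective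
    exact ha (funext (Fintype.linearIndependent_iff.mp hli a h))
  have hne : ∃ y, f y ≠ 0 := by
    by_contra h
    push Not at h
    exact hP (poly_zero_of_cos P fun x _ => by rw [← hfP, h])
  have hfa : ∀ x, AnalyticAt ℝ f x := by
    intro x
    have : AnalyticOnNhd ℝ f univ := by
      rw [hfdef]
      apply ContDiff.analyticOnNhd
      fun_prop
    exact this x (mem_univ x)
  obtain ⟨S, hS, hsg⟩ := sign_fix _ P hP rfl
  have hcard : L ≤ S.card := by
    by_contra hlt
    push Not at hlt
    set R : Polynomial ℝ := ∏ s ∈ S, (Polynomial.X - Polynomial.C s) with hR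
    have hRd : R.natDegree = S.card := by
      rw [hR, Polynomial.natDegree_finset_prod_X_sub_C_eq_card]
    have hRne : R ≠ 0 := (Polynomial.monic_prod_of_monic _ _ fun s _ => Polynomial.monic_X_sub_C s).ne_zero
    have hint : ∫ x in (0 : ℝ)..π, (P * R).eval (cos x) = 0 := by
      simp_rw [Polynomial.eval_mul, ← hfP, hfdef, Finset.sum_mul]
      rw [intervalIntegral.integral_finsetSum]
      · refine Finset.sum_eq_zero fun k _ => ?_
        by_cases hk : (k : ℕ) ≤ L
        · simp [hlow k hk]
        · simp_rw [mul_assoc]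
          rw [intervalIntegral.integral_const_mul, cos_orth_poly R k (by omega), mul_zero]
      · intro i _
        exact Continuous.intervalIntegrable (by fun_prop) _ _
    rcases hsg with h | h
    · exact mul_ne_zero hP hRne (poly_zero_of_int _ h hint)
    · refine neg_ne_zero.mpr (mul_ne_zero hP hRne) (poly_zero_of_int (-(P * R)) ?_ ?_)
      · intro t ht
        rw [Polynomial.eval_neg]
        linarith [h t ht]
      · simp_rw [Polynomial.eval_neg]
        rw [intervalIntegral.integral_neg, hint, neg_zero]
  have hac : ∀ s : S, 0 < arccos s.1 ∧ arccos s.1 < π ∧ cos (arccos s.1) = s.1 := fun s =>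
    have h := (hS s.1 s.2).1
    ⟨arccos_pos.mpr h.2, arccos_lt_pi.mpr h.1, cos_arccos h.1.le h.2.le⟩
  let g : S ⊕ S → {x : ℝ // x ∈ Set.Ico (0 : ℝ) (2 * Real.pi) ∧ f x = 0} := fun s =>
    match s with
    | Sum.inl s => ⟨arccos s.1, ⟨(hac s).1.le, by linarith [(hac s).2.1, pi_pos]⟩, by
        rw [hfP, (hac s).2.2]; exact (hS s.1 s.2).2⟩
    | Sum.inr s => ⟨2 * π - arccos s.1, ⟨by linarith [(hac s).2.1, pi_pos], by linarith [(hac s).1]⟩, by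
        rw [hfP, cos_two_pi_sub, (hac s).2.2]; exact (hS s.1 s.2).2⟩
  have hg : Function.Injective g := by
    have key : ∀ s t : S, arccos s.1 = arccos t.1 → s = t := by
      intro s t h
      apply Subtype.ext
      rw [← (hac s).2.2, ← (hac t).2.2, h]
    rintro (s | s) (t | t) h <;> have h' := congrArg Subtype.val h <;> simp only [g] at h'
    · rw [key s t h']
    · linarith [(hac s).2.1, (hac t).2.1]
    · linarith [(hac s).2.1, (hac t).2.1]
    · rw [key s t (by linarith)]
  unfold Zcount
  refine le_trans ?_ (ENNReal.tsum_comp_le_tsum_of_injective hg _)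
  rw [tsum_fintype]
  calc (2 * L : ℝ≥0∞) ≤ ((Fintype.card (S ⊕ S) : ℕ) : ℝ≥0∞) := by
        have : 2 * L ≤ Fintype.card (S ⊕ S) := by simp; omega
        exact_mod_cast this
    _ = ∑ _i : S ⊕ S, (1 : ℝ≥0∞) := by simp
    _ ≤ _ := by
        refine Finset.sum_le_sum fun i _ => ?_
        have := zeroMult_pos f hfa (g i).1 (g i).2.2 hne
        exact_mod_cast this
end

section
/- Let K ≥ 1, let X be a real number, and let a = (a_0, ..., a_K) be a nonzero vector of real numbers. Define F_{X,a}(x) = ∑_{k=0}^{K} a_k cos(kx) + X·∑_{k=0}^{K} a_k sin(kx), and let F_{X,ā} be the analogous function with the reversed coefficient vector ā = (a_K, ..., a_0). Then Z(F_{X,a}) + Z(F_{X,ā}) ≥ 2K, where Z(f) denotes the number of zeros of f in [0, 2π) counted with multiplicity. -/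
open Real Set
open scoped ENNReal

def HasPhase (f : ℝ → ℂ) (N : ℕ) : Prop :=
  ∃ (r φ : ℝ → ℝ), Continuous φ ∧ φ (2 * Real.pi) = φ 0 + Real.pi * N ∧
    ∀ x, f x = (r x : ℂ) * Complex.exp (φ x * Complex.I)

theorem HasPhase.mul {f g : ℝ → ℂ} {M N : ℕ} (hf : HasPhase f M) (hg : HasPhase g N) :
    HasPhase (fun x => f x * g x) (M + N) := by
  obtain ⟨r, φ, hc, hp, h⟩ := hf
  obtain ⟨s, ψ, hc', hp', h'⟩ := hg
  refine ⟨fun x => r x * s x, fun x => φ x + ψ x, hc.add hc', ?_, fun x => ?_⟩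
  · simp only [hp, hp']; push_cast; ring
  · simp only [h, h']; push_cast; rw [add_mul, Complex.exp_add]; ring

theorem hasPhase_const (c : ℂ) : HasPhase (fun _ => c) 0 := by
  refine ⟨fun _ => ‖c‖, fun _ => c.arg, continuous_const, by simp, fun x => ?_⟩
  simp [Complex.norm_mul_exp_arg_mul_I]

theorem hasPhase_exp : HasPhase (fun x : ℝ => Complex.exp (x * Complex.I)) 2 := by
  refine ⟨fun _ => 1, fun x => x, continuous_id, by push_cast; ring, fun x => by simp⟩

theorem hasPhase_slit (g : ℝ → ℂ) (hg : Continuous g) (hb : ∀ x, ‖g x‖ < 1)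
    (hp : g (2 * Real.pi) = g 0) : HasPhase (fun x => 1 + g x) 0 := by
  refine ⟨fun x => ‖1 + g x‖, fun x => (1 + g x).arg, ?_, by simp [hp], fun x => ?_⟩
  · rw [continuous_iff_continuousAt]
    intro x
    exact ContinuousAt.comp (f := fun x => 1 + g x)
      (Complex.continuousAt_arg (Complex.mem_slitPlane_of_norm_lt_one (hb x)))
      (by fun_prop)
  · simp [Complex.norm_mul_exp_arg_mul_I]

theorem hasPhase_linear (α : ℂ) :
    ∃ N : ℕ, N ≤ 2 ∧ HasPhase (fun x : ℝ => Complex.exp (x * Complex.I) - α) N := by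
  rcases lt_trichotomy ‖α‖ 1 with h | h | h
  · refine ⟨2, le_rfl, ?_⟩
    have := hasPhase_exp.mul (hasPhase_slit (fun x : ℝ => -α * Complex.exp (-(x * Complex.I)))
      (by fun_prop) (fun x => ?_) ?_)
    · convert this using 2 with x
      rw [mul_add, mul_one, mul_left_comm, ← Complex.exp_add]
      simp [sub_eq_add_neg]
    · rw [norm_mul, ← neg_mul, ← Complex.ofReal_neg, Complex.norm_exp_ofReal_mul_I]
      simpa using h
    · simp [Complex.exp_neg, Complex.exp_two_pi_mul_I]
  · refine ⟨1, by norm_num, ?_⟩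
    refine ⟨fun x => 2 * Real.sin ((x - α.arg) / 2),
      fun x => (x + α.arg) / 2 + Real.pi / 2, by fun_prop, by push_cast; ring, fun x => ?_⟩
    have hα : α = Complex.exp (α.arg * Complex.I) := by
      conv_lhs => rw [← Complex.norm_mul_exp_arg_mul_I α, h]
      simp
    generalize α.arg = θ at hα
    subst hα
    have e1 : (Complex.exp (x * Complex.I)) =
        Complex.exp (((x + θ) / 2 : ℂ) * Complex.I) * Complex.exp (((x - θ) / 2 : ℂ) * Complex.I) := by
      rw [← Complex.exp_add]; congr 1; ring
    have e2 : (Complex.exp (θ * Complex.I)) =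
        Complex.exp (((x + θ) / 2 : ℂ) * Complex.I) * Complex.exp (-((x - θ) / 2 : ℂ) * Complex.I) := by
      rw [← Complex.exp_add]; congr 1; ring
    push_cast
    rw [e1, e2, add_mul, Complex.exp_add, Complex.exp_pi_div_two_mul_I, Complex.sin]
    linear_combination (-Complex.exp (((x + θ) / 2 : ℂ) * Complex.I) * (Complex.exp (-((x - θ) / 2 : ℂ) * Complex.I) - Complex.exp (((x - θ) / 2 : ℂ) * Complex.I))) * Complex.I_sq
  · refine ⟨0, by norm_num, ?_⟩
    have hα : α ≠ 0 := by rintro rfl; simp at h; linarith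
    have := (hasPhase_const (-α)).mul (hasPhase_slit
      (fun x : ℝ => -α⁻¹ * Complex.exp (x * Complex.I))
      (by fun_prop) (fun x => ?_) ?_)
    · convert this using 2 with x
      field_simp
      ring
    · rw [norm_mul, Complex.norm_exp_ofReal_mul_I]
      simpa using inv_lt_one_of_one_lt₀ h
    · simp [Complex.exp_two_pi_mul_I]

theorem hasPhase_multiset (s : Multiset ℂ) :
    ∃ N : ℕ, N ≤ 2 * s.card ∧
      HasPhase (fun x : ℝ => (s.map fun α => Complex.exp (x * Complex.I) - α).prod) N := by
  induction s using Multiset.induction_on with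
  | empty => exact ⟨0, by simp, by simpa using hasPhase_const 1⟩
  | cons α s ih =>
    obtain ⟨N, hN, h⟩ := ih
    obtain ⟨M, hM, h'⟩ := hasPhase_linear α
    refine ⟨M + N, by rw [Multiset.card_cons]; omega, ?_⟩
    simpa using h'.mul h

theorem hasPhase_poly (P : Polynomial ℂ) :
    ∃ N : ℕ, N ≤ 2 * P.natDegree ∧
      HasPhase (fun x : ℝ => P.eval (Complex.exp (x * Complex.I))) N := by
  obtain ⟨N, hN, h⟩ := hasPhase_multiset P.roots
  have hd := Polynomial.card_roots' P
  refine ⟨0 + N, by omega, ?_⟩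
  convert (hasPhase_const P.leadingCoeff).mul h using 2 with x
  exact (IsAlgClosed.splits P).eval_eq_prod_roots _

/-- zeros of cos ∘ ψ -/
theorem exists_zeros (ψ : ℝ → ℝ) (hc : Continuous ψ) (N : ℕ)
    (hp : ψ (2 * Real.pi) = ψ 0 + Real.pi * N) :
    ∃ z : Fin N → ℝ, Function.Injective z ∧
      ∀ i, z i ∈ Set.Ico 0 (2 * Real.pi) ∧ Real.cos (ψ (z i)) = 0 := by
  have hpi := Real.pi_pos
  set m : ℤ := ⌈(ψ 0 - Real.pi / 2) / Real.pi⌉ with hm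
  have h1 : (ψ 0 - Real.pi / 2) / Real.pi ≤ m := Int.le_ceil _
  have h2 : (m : ℝ) < (ψ 0 - Real.pi / 2) / Real.pi + 1 := Int.ceil_lt_add_one _
  rw [div_le_iff₀ hpi] at h1
  have h2' : ((m : ℝ) - 1) * Real.pi < ψ 0 - Real.pi / 2 := by
    rw [← lt_div_iff₀ hpi]; linarith
  have key : ∀ i : Fin N, ∃ x ∈ Set.Ico 0 (2 * Real.pi),
      ψ x = (2 * ((m + (i : ℕ) : ℤ)) + 1) * Real.pi / 2 := by
    intro i
    have hi : ((i : ℕ) : ℝ) + 1 ≤ N := by exact_mod_cast i.2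
    have hi0 : (0 : ℝ) ≤ ((i : ℕ) : ℝ) := by positivity
    have := intermediate_value_Ico (by positivity : (0 : ℝ) ≤ 2 * Real.pi) (f := ψ) hc.continuousOn
    apply this
    push_cast
    constructor
    · nlinarith
    · rw [hp]; nlinarith
  choose z hz hz' using key
  refine ⟨z, fun i j hij => ?_, fun i => ⟨hz i, ?_⟩⟩
  · have := (hz' i).symm.trans ((congrArg ψ hij).trans (hz' j))
    have h3 : (2 * ((m + (i : ℕ) : ℤ)) + 1 : ℝ) = (2 * ((m + (j : ℕ) : ℤ)) + 1) := by
      have h4 : (2 * ((m + (i : ℕ) : ℤ)) + 1 : ℝ) * Real.pi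
        = (2 * ((m + (j : ℕ) : ℤ)) + 1) * Real.pi := by linarith
      exact mul_right_cancel₀ hpi.ne' h4
    push_cast at h3
    have : ((i : ℕ) : ℝ) = (j : ℕ) := by linarith
    exact Fin.ext (by exact_mod_cast this)
  · rw [Real.cos_eq_zero_iff]
    exact ⟨_, hz' i⟩

noncomputable def trigF (K : ℕ) (X : ℝ) (a : Fin (K + 1) → ℝ) (x : ℝ) : ℝ :=
  (∑ k : Fin (K + 1), a k * Real.cos ((k : ℕ) * x)) +
        X * ∑ k : Fin (K + 1), a k * Real.sin ((k : ℕ) * x)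

theorem trigF_complex (K : ℕ) (X : ℝ) (a : Fin (K + 1) → ℝ) (x : ℝ) :
    ((2 * trigF K X a x : ℝ) : ℂ) * Complex.exp (x * Complex.I) ^ K =
    (∑ k : Fin (K + 1), (Polynomial.C ((a k : ℂ) * (1 - X * Complex.I)) * Polynomial.X ^ (K + (k : ℕ))
      + Polynomial.C ((a k : ℂ) * (1 + X * Complex.I)) * Polynomial.X ^ (K - (k : ℕ)))).eval
      (Complex.exp (x * Complex.I)) := by
  rw [Polynomial.eval_finsetSum, trigF]
  push_cast
  rw [Finset.mul_sum, ← Finset.sum_add_distrib, Finset.mul_sum, Finset.sum_mul]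
  refine Finset.sum_congr rfl fun k _ => ?_
  have hk : (k : ℕ) ≤ K := Nat.lt_succ_iff.mp k.2
  have hpos : Complex.exp ((k : ℕ) * x * Complex.I) = Complex.exp (x * Complex.I) ^ (k : ℕ) := by
    rw [← Complex.exp_nat_mul]; ring_nf
  have hneg : Complex.exp (-((k : ℕ) * x) * Complex.I) * Complex.exp (x * Complex.I) ^ (k : ℕ) = 1 := by
    rw [← Complex.exp_nat_mul, ← Complex.exp_add, ← Complex.exp_zero]; congr 1; ring
  have hK : Complex.exp (x * Complex.I) ^ K =
    Complex.exp (x * Complex.I) ^ (K - (k : ℕ)) * Complex.exp (x * Complex.I) ^ (k : ℕ) := by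
    rw [← pow_add]; congr 1; omega
  simp only [Polynomial.eval_add, Polynomial.eval_mul, Polynomial.eval_C, Polynomial.eval_pow,
    Polynomial.eval_X, pow_add]
  rw [Complex.cos, Complex.sin, hpos, hK]
  generalize Complex.exp (-((k : ℕ) * x) * Complex.I) = w at *
  generalize Complex.exp (x * Complex.I) ^ (k : ℕ) = u at *
  generalize Complex.exp (x * Complex.I) ^ (K - (k : ℕ)) = v at *
  linear_combination (a k * v * (1 + X * Complex.I)) * hneg

theorem trigF_ne_zero (K : ℕ) (X : ℝ) (a : Fin (K + 1) → ℝ) (h : ∀ x, trigF K X a x = 0) :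
    a = 0 := by
  have hQ := fun x => trigF_complex K X a x
  simp only [h] at hQ
  set Q : Polynomial ℂ := (∑ k : Fin (K + 1), (Polynomial.C ((a k : ℂ) * (1 - X * Complex.I)) * Polynomial.X ^ (K + (k : ℕ))
      + Polynomial.C ((a k : ℂ) * (1 + X * Complex.I)) * Polynomial.X ^ (K - (k : ℕ)))) with hQd
  have hQ0 : Q = 0 := by
    apply Polynomial.eq_zero_of_infinite_isRoot
    have hinf : (Set.range fun x : Set.Ioc (-Real.pi) Real.pi =>
        Complex.exp ((x : ℝ) * Complex.I)).Infinite := by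
      have : Infinite (Set.Ioc (-Real.pi) Real.pi) :=
        (Set.Ioc_infinite (by linarith [Real.pi_pos])).to_subtype
      apply Set.infinite_range_of_injective
      intro x y hxy
      have h1 := congrArg Complex.arg hxy
      simp only [Complex.arg_exp_mul_I] at h1
      rw [(toIocMod_eq_self _).2, (toIocMod_eq_self _).2] at h1
      · exact Subtype.ext h1
      · have := y.2; rwa [show -Real.pi + 2 * Real.pi = Real.pi by ring]
      · have := x.2; rwa [show -Real.pi + 2 * Real.pi = Real.pi by ring]
    refine hinf.mono ?_
    rintro _ ⟨x, rfl⟩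
    have := hQ x
    simp only [Set.mem_ofPred_eq, Polynomial.IsRoot]
    rw [← this]; simp
  funext j
  have hj := congrArg (fun p => Polynomial.coeff p (K + (j : ℕ))) hQ0
  simp only [hQd, Polynomial.finsetSum_coeff, Polynomial.coeff_add, Polynomial.coeff_C_mul,
    Polynomial.coeff_X_pow, Polynomial.coeff_zero] at hj
  rw [Finset.sum_eq_single j] at hj
  · simp only [if_true, mul_one] at hj
    by_cases h0 : (j : ℕ) = 0
    · simp only [h0, add_zero, Nat.sub_zero, if_true, mul_one] at hj
      have : (2 * a j : ℂ) = 0 := by rw [← hj]; ring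
      simpa using this
    · rw [if_neg (by omega)] at hj
      have hc : (1 - X * Complex.I : ℂ) ≠ 0 := by
        intro hc
        have := congrArg Complex.re hc
        simp at this
      simpa [hc] using hj
  · intro k _ hkj
    have : (k : ℕ) ≠ j := fun h => hkj (Fin.ext h)
    rw [if_neg (by omega), if_neg (by omega)]; simp
  · simp

theorem trigF_analytic (K : ℕ) (X : ℝ) (a : Fin (K + 1) → ℝ) :
    AnalyticOnNhd ℝ (trigF K X a) Set.univ := by
  intro x _
  unfold trigF
  refine AnalyticAt.add ?_ (analyticAt_const.mul ?_)
  · refine Finset.analyticAt_fun_sum _ fun k _ => analyticAt_const.mul ?_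
    exact (Real.analyticAt_cos).fun_comp (analyticAt_const.mul analyticAt_id)
  · refine Finset.analyticAt_fun_sum _ fun k _ => analyticAt_const.mul ?_
    exact (Real.analyticAt_sin).fun_comp (analyticAt_const.mul analyticAt_id)

theorem zeroMult_pos_s5 (K : ℕ) (X : ℝ) (a : Fin (K + 1) → ℝ) (ha : a ≠ 0) (x : ℝ)
    (hx : trigF K X a x = 0) : 1 ≤ zeroMult (trigF K X a) x := by
  have hne : {n : ℕ | 1 ≤ n ∧ iteratedDeriv n (trigF K X a) x ≠ 0}.Nonempty := by
    by_contra hcon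
    rw [Set.not_nonempty_iff_eq_empty, Set.eq_empty_iff_forall_notMem] at hcon
    have hall : ∀ n, iteratedDeriv n (trigF K X a) x = 0 := by
      intro n
      rcases Nat.eq_zero_or_pos n with rfl | hn
      · simpa using hx
      · by_contra h; exact hcon n ⟨hn, h⟩
    have han := trigF_analytic K X a
    have htop : analyticOrderAt (trigF K X a) x = ⊤ := by
      rw [ENat.eq_top_iff_forall_ge]
      intro n
      rw [natCast_le_analyticOrderAt_iff_iteratedDeriv_eq_zero (han x trivial)]
      intro i _
      exact hall i
    rw [analyticOrderAt_eq_top] at htop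
    apply ha
    apply trigF_ne_zero K X a
    have := han.eqOn_zero_of_preconnected_of_eventuallyEq_zero isPreconnected_univ (Set.mem_univ x) htop
    intro y
    exact this (Set.mem_univ y)
  exact (Nat.sInf_mem hne).1

theorem le_Zcount (K : ℕ) (X : ℝ) (a : Fin (K + 1) → ℝ) (ha : a ≠ 0) (N : ℕ) (r ψ : ℝ → ℝ)
    (hc : Continuous ψ) (hp : ψ (2 * Real.pi) = ψ 0 + Real.pi * N)
    (hF : ∀ x, trigF K X a x = r x * Real.cos (ψ x)) :
    (N : ℝ≥0∞) ≤ Zcount (trigF K X a) := by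
  obtain ⟨z, hz, hz'⟩ := exists_zeros ψ hc N hp
  have hz0 : ∀ i, trigF K X a (z i) = 0 := fun i => by rw [hF, (hz' i).2, mul_zero]
  let g : Fin N → {x : ℝ // x ∈ Set.Ico (0 : ℝ) (2 * Real.pi) ∧ trigF K X a x = 0} :=
    fun i => ⟨z i, (hz' i).1, hz0 i⟩
  have hg : Function.Injective g := fun i j h => hz (congrArg Subtype.val h)
  unfold Zcount
  refine le_trans ?_ (ENNReal.tsum_comp_le_tsum_of_injective hg _)
  rw [tsum_fintype]
  calc (N : ℝ≥0∞) = ∑ i : Fin N, (1 : ℝ≥0∞) := by simp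
    _ ≤ _ := Finset.sum_le_sum fun i _ => by
      have := zeroMult_pos_s5 K X a ha (z i) (hz0 i)
      exact_mod_cast this

theorem mixed_eq (X u : ℝ) :
    Real.cos u + X * Real.sin u = (Real.cos (Real.arctan X))⁻¹ * Real.cos (u - Real.arctan X) := by
  have hc := (Real.cos_arctan_pos X).ne'
  have ht : X * Real.cos (Real.arctan X) = Real.sin (Real.arctan X) := by
    conv_lhs => rw [← Real.tan_arctan X, Real.arctan_tan (Real.neg_pi_div_two_lt_arctan X) (Real.arctan_lt_pi_div_two X)]
    exact Real.tan_mul_cos hc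
  rw [Real.cos_sub, ← ht]
  field_simp

theorem palindromic_mixed_trig_zero_count (K : ℕ) (hK : 1 ≤ K) (X : ℝ)
    (a : Fin (K + 1) → ℝ) (ha : a ≠ 0) :
    (2 * K : ℝ≥0∞) ≤
      Zcount (fun x => (∑ k : Fin (K + 1), a k * Real.cos ((k : ℕ) * x)) +
        X * ∑ k : Fin (K + 1), a k * Real.sin ((k : ℕ) * x)) +
      Zcount (fun x => (∑ k : Fin (K + 1), a (Fin.rev k) * Real.cos ((k : ℕ) * x)) +
        X * ∑ k : Fin (K + 1), a (Fin.rev k) * Real.sin ((k : ℕ) * x)) := by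
  change (2 * K : ℝ≥0∞) ≤ Zcount (trigF K X a) + Zcount (trigF K X (fun k => a (Fin.rev k)))
  have ha' : (fun k => a (Fin.rev k)) ≠ 0 := by
    intro h
    apply ha
    funext k
    simpa using congrFun h (Fin.rev k)
  let P : Polynomial ℂ := ∑ k : Fin (K + 1), Polynomial.C (a k : ℂ) * Polynomial.X ^ (k : ℕ)
  have hdeg : P.natDegree ≤ K := by
    apply Polynomial.natDegree_sum_le_of_forall_le
    intro k _
    exact (Polynomial.natDegree_C_mul_X_pow_le _ _).trans (Nat.lt_succ_iff.mp k.2)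
  obtain ⟨N, hN, r, φ, hc, hp, h⟩ := hasPhase_poly P
  have hP : ∀ x : ℝ, ∑ k : Fin (K + 1), (a k : ℂ) * Complex.exp (((k : ℕ) * x : ℝ) * Complex.I)
      = r x * Complex.exp (φ x * Complex.I) := by
    intro x
    rw [← h x]
    simp only [P, Polynomial.eval_finsetSum, Polynomial.eval_mul, Polynomial.eval_C,
      Polynomial.eval_pow, Polynomial.eval_X]
    refine Finset.sum_congr rfl fun k _ => ?_
    rw [← Complex.exp_nat_mul]; push_cast; ring_nf
  have hre : ∀ x : ℝ, ∑ k : Fin (K + 1), a k * Real.cos ((k : ℕ) * x) = r x * Real.cos (φ x) := by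
    intro x
    have := congrArg Complex.re (hP x)
    rw [Complex.re_sum] at this
    simpa only [Complex.re_ofReal_mul, Complex.exp_ofReal_mul_I_re] using this
  have him : ∀ x : ℝ, ∑ k : Fin (K + 1), a k * Real.sin ((k : ℕ) * x) = r x * Real.sin (φ x) := by
    intro x
    have := congrArg Complex.im (hP x)
    rw [Complex.im_sum] at this
    simpa only [Complex.im_ofReal_mul, Complex.exp_ofReal_mul_I_im] using this
  have hN2 : N ≤ 2 * K := by omega
  have A := le_Zcount K X a ha N (fun x => r x * (Real.cos (Real.arctan X))⁻¹)
    (fun x => φ x - Real.arctan X) (by fun_prop) (by simp only [hp]; ring) (fun x => by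
      rw [mul_assoc, ← mixed_eq, trigF, hre, him]; ring)
  have B := le_Zcount K X (fun k => a (Fin.rev k)) ha' (2 * K - N)
    (fun x => r x * (Real.cos (Real.arctan X))⁻¹)
    (fun x => K * x - φ x - Real.arctan X) (by fun_prop)
    (by simp only [hp]; rw [Nat.cast_sub hN2]; push_cast; ring) (fun x => by
      rw [mul_assoc, ← mixed_eq, trigF, ← Equiv.sum_comp Fin.revPerm,
        ← Equiv.sum_comp Fin.revPerm (fun k => a (Fin.rev k) * Real.sin ((k : ℕ) * x))]
      have hk : ∀ k : Fin (K + 1), (((Fin.rev k : Fin (K+1)) : ℕ) : ℝ) = K - (k : ℕ) := by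
        intro k
        have hk : (k : ℕ) ≤ K := Nat.lt_succ_iff.mp k.2
        rw [Fin.val_rev, ← Nat.cast_sub hk]; congr 1; omega
      simp only [Fin.revPerm_apply, Fin.rev_rev, hk, sub_mul, Real.cos_sub, Real.sin_sub, mul_add,
        mul_sub, Finset.sum_add_distrib, Finset.sum_sub_distrib, mul_left_comm (a _),
        ← Finset.mul_sum, hre, him]
      ring)
  calc (2 * K : ℝ≥0∞) = ((N + (2 * K - N) : ℕ) : ℝ≥0∞) := by
        rw [Nat.add_sub_cancel' hN2]; push_cast; rfl
    _ = (N : ℝ≥0∞) + ((2 * K - N : ℕ) : ℝ≥0∞) := by rw [Nat.cast_add]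
    _ ≤ _ := add_le_add A B
end
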